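/- Let 0 ≤ d < 4/5. Then (1/(d-1)) ∫₀¹∫₀¹∫₀¹ u^{3-3d} v^{2-d} (1-uv)^{-d} (1-vw)^{-2d} (1-uvw)^{-d} (1-w)^{1-d} ₂F₁(1,d;2-d; v(1-w)/(1-vw)) dw dv du = [Γ(1-d)/((1-d)(2-2d))]·[Γ(3-3d)Γ(4-5d)/(Γ(4-4d)Γ(5-5d))]·₃F₂(2-2d,1,d;3-2d,2-d;1) − [Γ(1-d)³ Γ(4-5d)/(Γ(3-2d)Γ(2-d)Γ(5-5d))]·₃F₂(2-2d,1,2d-1;3-2d,2-d;1). -/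

import Mathlib

open Real MeasureTheory

/-- Pochhammer symbol `(a)_k = a (a+1) ⋯ (a+k-1)` for real `a`. -/
noncomputable def poch (a : ℝ) (k : ℕ) : ℝ := (ascPochhammer ℝ k).eval a

/-- Gaussian hypergeometric function `₂F₁(a,b;c;z)`. -/
noncomputable def hyp2F1 (a b c z : ℝ) : ℝ :=
  ∑' k : ℕ, (poch a k * poch b k) / poch c k * z ^ k / (Nat.factorial k)

/-- Generalized hypergeometric function `₃F₂(a₁,a₂,a₃;b₁,b₂;z)`. -/
noncomputable def hyp3F2 (a₁ a₂ a₃ b₁ b₂ z : ℝ) : ℝ :=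
  ∑' k : ℕ, (poch a₁ k * poch a₂ k * poch a₃ k) / (poch b₁ k * poch b₂ k) * z ^ k /
    (Nat.factorial k)

/-- Generalized hypergeometric function `₄F₃(a₁,a₂,a₃,a₄;b₁,b₂,b₃;z)`. -/
noncomputable def hyp4F3 (a₁ a₂ a₃ a₄ b₁ b₂ b₃ z : ℝ) : ℝ :=
  ∑' k : ℕ, (poch a₁ k * poch a₂ k * poch a₃ k * poch a₄ k) /
    (poch b₁ k * poch b₂ k * poch b₃ k) * z ^ k / (Nat.factorial k)

/-!
Euler's integral for the inner `₂F₁` turns the triple integral into a fourfold one, and the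
substitution `y₁ = 1 - u`, `y₂ = 1 - u v`, `y₃ = 1 - u v w`, `y₄ = 1 - u v s` turns that into the
integral over `0 < y₁ < y₂ < y₄ < y₃ < 1` of
`(y₂ (y₄ - y₂) (y₄ - y₁) (y₃ - y₁) y₃) ^ (-d)`. By homogeneity `y₃` integrates out to a factor
`1 / (4 - 5 d)` and may be set to `1`. Once the constraint `y₁ < y₂` is dropped, the variable `y₂`
integrates out to a Beta function; on the complementary region `y₂ < y₁`, so does the
position of `y₂` after rescaling `[y₂, 1]` to `[0, 1]`. In both cases the remaining double integral
over a triangle is a `₃F₂` at `1` by Euler's integral applied twice, and the two terms of the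
formula come from the region without the constraint and from the complementary region.

All of this takes place in `ℝ≥0∞`, where Tonelli's theorem and changes of variables need no
integrability.
-/

open Filter Asymptotics ProbabilityTheory
open scoped ENNReal Nat Topology

section Pochhammer

theorem poch_zero (a : ℝ) : poch a 0 = 1 := by simp [poch]

theorem poch_succ (a : ℝ) (k : ℕ) : poch a (k + 1) = poch a k * (a + k) := by
  simp [poch, ascPochhammer_succ_eval]

theorem poch_pos {a : ℝ} (ha : 0 < a) (k : ℕ) : 0 < poch a k := ascPochhammer_pos k a ha

theorem poch_one (k : ℕ) : poch 1 k = k ! := ascPochhammer_eval_one ℝ k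

theorem poch_succ_eq_prod (a : ℝ) (n : ℕ) :
    poch a (n + 1) = ∏ j ∈ Finset.range (n + 1), (a + j) := by
  induction n with
  | zero => simp [poch]
  | succ n ih => rw [poch_succ, ih, Finset.prod_range_succ _ (n + 1)]

theorem Gamma_add_natCast_eq_poch_mul {a : ℝ} (ha : 0 < a) (k : ℕ) :
    Gamma (a + k) = poch a k * Gamma a := by
  induction k with
  | zero => simp [poch_zero]
  | succ k ih =>
    rw [Nat.cast_succ, ← add_assoc, Gamma_add_one (by positivity), ih, poch_succ]
    ring

theorem poch_div_poch_eq_rpow_mul_GammaSeq (b c : ℝ) {n : ℕ} (hn : n ≠ 0) :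
    poch b (n + 1) / poch c (n + 1) = GammaSeq c n / GammaSeq b n * (n : ℝ) ^ (b - c) := by
  have hn' : (0 : ℝ) < n := by positivity
  rw [GammaSeq, GammaSeq, ← poch_succ_eq_prod, ← poch_succ_eq_prod, rpow_sub hn']
  field_simp

theorem isBigO_poch_div_poch (b c : ℝ) :
    (fun n : ℕ => poch b (n + 1) / poch c (n + 1)) =O[atTop] fun n : ℕ => (n : ℝ) ^ (b - c) := by
  by_cases hb : ∃ m : ℕ, b = -m
  · obtain ⟨m, rfl⟩ := hb
    refine EventuallyEq.trans_isBigO ?_ (isBigO_zero _ _)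
    filter_upwards [eventually_ge_atTop m] with n hn
    rw [poch, ascPochhammer_eval_neg_coe_nat_of_lt (by omega), zero_div]
  · have hlim : Tendsto (fun n => GammaSeq c n / GammaSeq b n) atTop (𝓝 (Gamma c / Gamma b)) :=
      (GammaSeq_tendsto_Gamma c).div (GammaSeq_tendsto_Gamma b)
        (Gamma_ne_zero fun m hm => hb ⟨m, hm⟩)
    have hO := (hlim.isBigO_one ℝ).mul (isBigO_refl (fun n : ℕ => (n : ℝ) ^ (b - c)) atTop)
    simp only [one_mul] at hO
    refine EventuallyEq.trans_isBigO ?_ hO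
    filter_upwards [eventually_ne_atTop 0] with n hn using poch_div_poch_eq_rpow_mul_GammaSeq b c hn

theorem summable_rpow_mul_pow (e : ℝ) {z : ℝ} (hz : |z| < 1) :
    Summable fun n : ℕ => (n : ℝ) ^ e * z ^ n := by
  refine summable_of_isBigO_nat (summable_pow_mul_geometric_of_norm_lt_one ⌈e⌉₊ hz) ?_
  refine IsBigO.mul (IsBigO.of_norm_eventuallyLE ?_) (isBigO_refl _ _)
  filter_upwards [eventually_ge_atTop 1] with n hn
  have hn' : (1 : ℝ) ≤ n := by exact_mod_cast hn
  rw [norm_of_nonneg (by positivity), ← rpow_natCast]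
  exact rpow_le_rpow_of_exponent_le hn' (Nat.le_ceil e)

theorem summable_hyp2F1 (a b c : ℝ) {z : ℝ} (hz : |z| < 1) :
    Summable fun k : ℕ => (poch a k * poch b k) / poch c k * z ^ k / k ! := by
  refine (summable_nat_add_iff 1).1 ?_
  refine summable_of_isBigO_nat ((summable_rpow_mul_pow ((a - c) + (b - 1)) hz).mul_right z) ?_
  refine (((isBigO_poch_div_poch a c).mul (isBigO_poch_div_poch b 1)).mul
    (isBigO_refl (fun n : ℕ => z ^ (n + 1)) atTop)).congr' ?_ ?_
  · filter_upwards with n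
    rw [poch_one]
    ring
  · filter_upwards [eventually_gt_atTop 0] with n hn
    rw [rpow_add (by positivity), pow_succ]
    ring

theorem summable_hyp3F2_one {a₁ a₂ a₃ b₁ b₂ : ℝ} (h : a₁ + a₂ + a₃ < b₁ + b₂) :
    Summable fun k : ℕ =>
      (poch a₁ k * poch a₂ k * poch a₃ k) / (poch b₁ k * poch b₂ k) * 1 ^ k / k ! := by
  refine (summable_nat_add_iff 1).1 ?_
  have hp : (a₁ - b₁) + (a₂ - b₂) + (a₃ - 1) < -1 := by linarith
  refine summable_of_isBigO_nat (summable_nat_rpow.2 hp) ?_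
  refine (((isBigO_poch_div_poch a₁ b₁).mul (isBigO_poch_div_poch a₂ b₂)).mul
    (isBigO_poch_div_poch a₃ 1)).congr' ?_ ?_
  · filter_upwards with n
    rw [poch_one]
    ring
  · filter_upwards [eventually_gt_atTop 0] with n hn
    rw [rpow_add (by positivity), rpow_add (by positivity)]

theorem hasSum_one_sub_rpow_neg (b : ℝ) {x : ℝ} (hx : |x| < 1) :
    HasSum (fun k : ℕ => poch b k / k ! * x ^ k) ((1 - x) ^ (-b)) := by
  have h := (Real.one_div_one_sub_rpow_hasFPowerSeriesOnBall_zero b).hasSum (y := x)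
    (by simpa [enorm_eq_nnnorm, ← NNReal.coe_lt_coe] using hx)
  have hx' : 0 ≤ 1 - x := by linarith [(abs_lt.1 hx).2]
  simp only [zero_add, FormalMultilinearSeries.ofScalars_apply_eq, smul_eq_mul] at h
  rw [rpow_neg hx', ← one_div]
  convert! h using 3 with k
  rw [Ring.choose, show b + k - 1 - k + 1 = b by ring, div_eq_iff (by positivity), mul_comm,
    ← nsmul_eq_mul, Ring.factorial_nsmul_multichoose_eq_ascPochhammer,
    Polynomial.ascPochhammer_smeval_eq_eval, poch]

end Pochhammer

section SeriesIntegral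

variable {α E : Type*} {m : MeasurableSpace α} {μ : Measure α} [NormedAddCommGroup E]

theorem integrable_of_hasSum [CompleteSpace E] {F : ℕ → α → E} {f : α → E}
    (hF : ∀ k, Integrable (F k) μ)
    (hsum : Summable fun k => ∫ x, ‖F k x‖ ∂μ) (hf : ∀ᵐ x ∂μ, HasSum (fun k => F k x) (f x)) :
    Integrable f μ := by
  refine ⟨aestronglyMeasurable_of_tendsto_ae atTop
    (fun n => (integrable_finsetSum (Finset.range n) fun k _ => hF k).aestronglyMeasurable)
    (hf.mono fun x hx => hx.tendsto_sum_nat), ?_⟩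
  calc ∫⁻ x, ‖f x‖ₑ ∂μ ≤ ∫⁻ x, ∑' k, ‖F k x‖ₑ ∂μ := by
        refine lintegral_mono_ae (hf.mono fun x hx => ?_)
        rw [← hx.tsum_eq]
        exact enorm_tsum_le_tsum_enorm
    _ = ∑' k, ENNReal.ofReal (∫ x, ‖F k x‖ ∂μ) := by
        rw [lintegral_tsum fun k => (hF k).aestronglyMeasurable.enorm]
        exact tsum_congr fun k => (ofReal_integral_norm_eq_lintegral_enorm (hF k)).symm
    _ = ENNReal.ofReal (∑' k, ∫ x, ‖F k x‖ ∂μ) :=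
        (ENNReal.ofReal_tsum_of_nonneg (fun k => by positivity) hsum).symm
    _ < ∞ := ENNReal.ofReal_lt_top

end SeriesIntegral

section EulerIntegral

variable {a b : ℝ}

theorem measurable_betaPDF (a b : ℝ) : Measurable (betaPDF a b) :=
  (measurable_betaPDFReal a b).ennreal_ofReal

theorem ae_betaMeasure_mem_Ioo (a b : ℝ) : ∀ᵐ x ∂betaMeasure a b, x ∈ Set.Ioo (0 : ℝ) 1 := by
  rw [betaMeasure, ae_withDensity_iff (measurable_betaPDF a b)]
  refine Eventually.of_forall fun x hx => ?_
  by_contra h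
  rw [Set.mem_Ioo, not_and_or, not_lt, not_lt] at h
  exact hx (h.elim betaPDF_eq_zero_of_nonpos betaPDF_eq_zero_of_one_le)

theorem betaPDFReal_nonneg (ha : 0 < a) (hb : 0 < b) (x : ℝ) : 0 ≤ betaPDFReal a b x := by
  by_cases h : 0 < x ∧ x < 1
  · exact (betaPDFReal_pos h.1 h.2 ha hb).le
  · rw [betaPDFReal, if_neg h]

theorem integral_betaPDFReal_eq_one (ha : 0 < a) (hb : 0 < b) : ∫ x, betaPDFReal a b x = 1 := by
  rw [integral_eq_lintegral_of_nonneg_ae (.of_forall (betaPDFReal_nonneg ha hb))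
    (by fun_prop)]
  exact congrArg ENNReal.toReal (lintegral_betaPDF_eq_one ha hb)

theorem betaPDFReal_mul_pow (ha : 0 < a) (hb : 0 < b) (k : ℕ) (x : ℝ) :
    betaPDFReal a b x * x ^ k = poch a k / poch (a + b) k * betaPDFReal (a + k) b x := by
  by_cases h : 0 < x ∧ x < 1
  · have hx := h.1
    have hpa := poch_pos ha k
    have hpab := poch_pos (add_pos ha hb) k
    rw [betaPDFReal, betaPDFReal, if_pos h, if_pos h, beta, beta, add_right_comm a (k : ℝ) b,
      Gamma_add_natCast_eq_poch_mul ha, Gamma_add_natCast_eq_poch_mul (add_pos ha hb),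
      add_sub_right_comm, rpow_add hx, rpow_natCast]
    field_simp
  · rw [betaPDFReal, betaPDFReal, if_neg h, if_neg h, zero_mul, mul_zero]

theorem integral_pow_betaMeasure (ha : 0 < a) (hb : 0 < b) (k : ℕ) :
    ∫ x, x ^ k ∂betaMeasure a b = poch a k / poch (a + b) k := by
  rw [betaMeasure, integral_withDensity_eq_integral_toReal_smul (measurable_betaPDF a b)
    (.of_forall fun _ => ENNReal.ofReal_lt_top)]
  simp_rw [betaPDF, ENNReal.toReal_ofReal (betaPDFReal_nonneg ha hb _), smul_eq_mul,
    betaPDFReal_mul_pow ha hb]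
  rw [integral_const_mul, integral_betaPDFReal_eq_one (by positivity) hb, mul_one]

theorem integrable_pow_betaMeasure (ha : 0 < a) (hb : 0 < b) (k : ℕ) :
    Integrable (fun x => x ^ k) (betaMeasure a b) := by
  have := isProbabilityMeasureBeta ha hb
  refine Integrable.of_bound (by fun_prop) 1 ((ae_betaMeasure_mem_Ioo a b).mono fun x hx => ?_)
  rw [norm_pow, norm_of_nonneg hx.1.le]
  exact pow_le_one₀ hx.1.le hx.2.le

section PowerSeries

variable {c : ℕ → ℝ} {f : ℝ → ℝ}

theorem summable_integral_norm_betaMeasure (ha : 0 < a) (hb : 0 < b)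
    (hc : Summable fun k => c k * (poch a k / poch (a + b) k)) :
    Summable fun k => ∫ x, ‖c k * x ^ k‖ ∂betaMeasure a b := by
  refine hc.norm.congr fun k => ?_
  have hmoment : 0 < poch a k / poch (a + b) k :=
    div_pos (poch_pos ha k) (poch_pos (add_pos ha hb) k)
  rw [norm_mul, norm_of_nonneg hmoment.le, ← integral_pow_betaMeasure ha hb, ← integral_const_mul]
  refine integral_congr_ae ((ae_betaMeasure_mem_Ioo a b).mono fun x hx => ?_)
  simp only [norm_mul, norm_pow, norm_of_nonneg hx.1.le]

theorem integrable_betaMeasure_of_hasSum (ha : 0 < a) (hb : 0 < b)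
    (hc : Summable fun k => c k * (poch a k / poch (a + b) k))
    (hf : ∀ x ∈ Set.Ioo (0 : ℝ) 1, HasSum (fun k => c k * x ^ k) (f x)) :
    Integrable f (betaMeasure a b) :=
  integrable_of_hasSum (fun k => (integrable_pow_betaMeasure ha hb k).const_mul (c k))
    (summable_integral_norm_betaMeasure ha hb hc) ((ae_betaMeasure_mem_Ioo a b).mono hf)

theorem integral_betaMeasure_of_hasSum (ha : 0 < a) (hb : 0 < b)
    (hc : Summable fun k => c k * (poch a k / poch (a + b) k))
    (hf : ∀ x ∈ Set.Ioo (0 : ℝ) 1, HasSum (fun k => c k * x ^ k) (f x)) :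
    ∫ x, f x ∂betaMeasure a b = ∑' k, c k * (poch a k / poch (a + b) k) := by
  have h := hasSum_integral_of_summable_integral_norm
    (fun k => (integrable_pow_betaMeasure ha hb k).const_mul (c k))
    (summable_integral_norm_betaMeasure ha hb hc)
  simp_rw [integral_const_mul, integral_pow_betaMeasure ha hb] at h
  rw [h.tsum_eq]
  exact integral_congr_ae ((ae_betaMeasure_mem_Ioo a b).mono fun x hx => (hf x hx).tsum_eq.symm)

end PowerSeries

end EulerIntegral

section HypergeometricIntegral

variable {a b x z : ℝ}

theorem abs_mul_lt_one (hz : |z| < 1) (hx : x ∈ Set.Ioo (0 : ℝ) 1) : |z * x| < 1 := by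
  rw [abs_mul, abs_of_pos hx.1]
  exact mul_lt_one_of_nonneg_of_lt_one_left (abs_nonneg z) hz hx.2.le

theorem one_sub_mul_pos (hz : |z| < 1) (hx : x ∈ Set.Ioo (0 : ℝ) 1) : 0 < 1 - z * x :=
  sub_pos.2 (abs_lt.1 (abs_mul_lt_one hz hx)).2

theorem hasSum_one_sub_mul_rpow_neg (s : ℝ) (hz : |z| < 1) (hx : x ∈ Set.Ioo (0 : ℝ) 1) :
    HasSum (fun k : ℕ => poch s k / k ! * z ^ k * x ^ k) ((1 - z * x) ^ (-s)) := by
  simpa only [mul_pow, mul_assoc] using hasSum_one_sub_rpow_neg s (abs_mul_lt_one hz hx)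

theorem hyp2F1_term_eq_mul_moment (a s c z : ℝ) (k : ℕ) :
    (poch a k * poch s k) / poch c k * z ^ k / k ! =
      poch s k / k ! * z ^ k * (poch a k / poch c k) := by
  ring

theorem integrable_one_sub_mul_rpow_neg (s : ℝ) (ha : 0 < a) (hb : 0 < b) (hz : |z| < 1) :
    Integrable (fun x => (1 - z * x) ^ (-s)) (betaMeasure a b) :=
  integrable_betaMeasure_of_hasSum ha hb
    ((summable_hyp2F1 a s (a + b) hz).congr (hyp2F1_term_eq_mul_moment a s (a + b) z))
    fun _ hx => hasSum_one_sub_mul_rpow_neg s hz hx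

theorem integral_one_sub_mul_rpow_neg (s : ℝ) (ha : 0 < a) (hb : 0 < b) (hz : |z| < 1) :
    ∫ x, (1 - z * x) ^ (-s) ∂betaMeasure a b = hyp2F1 a s (a + b) z := by
  rw [hyp2F1, tsum_congr (hyp2F1_term_eq_mul_moment a s (a + b) z)]
  exact integral_betaMeasure_of_hasSum ha hb
    ((summable_hyp2F1 a s (a + b) hz).congr (hyp2F1_term_eq_mul_moment a s (a + b) z))
    fun _ hx => hasSum_one_sub_mul_rpow_neg s hz hx

theorem one_sub_mul_rpow_nonneg_ae (p a b : ℝ) (hz : |z| < 1) :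
    0 ≤ᵐ[betaMeasure a b] fun x => (1 - z * x) ^ p :=
  (ae_betaMeasure_mem_Ioo a b).mono fun _ hx => rpow_nonneg (one_sub_mul_pos hz hx).le p

theorem hyp2F1_nonneg (s : ℝ) (ha : 0 < a) (hb : 0 < b) (hz : |z| < 1) :
    0 ≤ hyp2F1 a s (a + b) z := by
  rw [← integral_one_sub_mul_rpow_neg s ha hb hz]
  exact integral_nonneg_of_ae (one_sub_mul_rpow_nonneg_ae (-s) a b hz)

variable {a₂ a₃ b₂ : ℝ}

theorem hasSum_hyp2F1 (a₂ a₃ b₂ : ℝ) (hx : x ∈ Set.Ioo (0 : ℝ) 1) :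
    HasSum (fun k : ℕ => (poch a₂ k * poch a₃ k) / poch b₂ k / k ! * x ^ k)
      (hyp2F1 a₂ a₃ b₂ x) := by
  have hx' : |x| < 1 := by rw [abs_of_pos hx.1]; exact hx.2
  simpa only [hyp2F1, div_mul_eq_mul_div] using (summable_hyp2F1 a₂ a₃ b₂ hx').hasSum

theorem hyp3F2_term_eq_mul_moment (a₁ a₂ a₃ b₁ b₂ : ℝ) (k : ℕ) :
    (poch a₁ k * poch a₂ k * poch a₃ k) / (poch b₁ k * poch b₂ k) * 1 ^ k / k ! =
      (poch a₂ k * poch a₃ k) / poch b₂ k / k ! * (poch a₁ k / poch b₁ k) := by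
  ring

theorem integrable_hyp2F1_betaMeasure (ha : 0 < a) (hb : 0 < b) (h : a₂ + a₃ < b + b₂) :
    Integrable (hyp2F1 a₂ a₃ b₂) (betaMeasure a b) :=
  integrable_betaMeasure_of_hasSum ha hb
    ((summable_hyp3F2_one (by linarith)).congr (hyp3F2_term_eq_mul_moment a a₂ a₃ (a + b) b₂))
    fun _ hx => hasSum_hyp2F1 a₂ a₃ b₂ hx

theorem integral_hyp2F1_betaMeasure (ha : 0 < a) (hb : 0 < b) (h : a₂ + a₃ < b + b₂) :
    ∫ x, hyp2F1 a₂ a₃ b₂ x ∂betaMeasure a b = hyp3F2 a a₂ a₃ (a + b) b₂ 1 := by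
  rw [hyp3F2, tsum_congr (hyp3F2_term_eq_mul_moment a a₂ a₃ (a + b) b₂)]
  exact integral_betaMeasure_of_hasSum ha hb
    ((summable_hyp3F2_one (by linarith)).congr (hyp3F2_term_eq_mul_moment a a₂ a₃ (a + b) b₂))
    fun _ hx => hasSum_hyp2F1 a₂ a₃ b₂ hx

theorem hyp2F1_nonneg_ae {a' b' : ℝ} (s : ℝ) (ha' : 0 < a') (hb' : 0 < b') (a b : ℝ) :
    0 ≤ᵐ[betaMeasure a b] hyp2F1 a' s (a' + b') :=
  (ae_betaMeasure_mem_Ioo a b).mono fun _ hx =>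
    hyp2F1_nonneg s ha' hb' ((abs_of_pos hx.1).trans_lt hx.2)

theorem hyp3F2_one_nonneg {a' b' s : ℝ} (ha : 0 < a) (hb : 0 < b) (ha' : 0 < a') (hb' : 0 < b')
    (h : s < b + b') :
    0 ≤ hyp3F2 a a' s (a + b) (a' + b') 1 := by
  rw [← integral_hyp2F1_betaMeasure ha hb (by linarith)]
  exact integral_nonneg_of_ae (hyp2F1_nonneg_ae s ha' hb' a b)

end HypergeometricIntegral

section TruncatedPower

/-- The truncated power `x₊ ^ p` with values in `ℝ≥0∞`: it vanishes for `x ≤ 0`, so that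
`truncPow 0` is the indicator function of `x > 0`. Products of truncated powers of linear forms
encode integrands together with the polytope on which they live. -/
noncomputable def truncPow (p x : ℝ) : ℝ≥0∞ := if 0 < x then ENNReal.ofReal (x ^ p) else 0

variable {p q c x y : ℝ}

theorem truncPow_of_pos (p : ℝ) (hx : 0 < x) : truncPow p x = ENNReal.ofReal (x ^ p) := if_pos hx

theorem truncPow_of_nonpos (p : ℝ) (hx : x ≤ 0) : truncPow p x = 0 := if_neg hx.not_gt

theorem truncPow_zero_of_pos (hx : 0 < x) : truncPow 0 x = 1 := by simp [truncPow_of_pos 0 hx]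

theorem truncPow_ne_zero_iff : truncPow p x ≠ 0 ↔ 0 < x := by
  refine ⟨fun h => not_le.1 fun hx => h (truncPow_of_nonpos p hx), fun hx => ?_⟩
  rw [truncPow_of_pos p hx]
  exact (ENNReal.ofReal_pos.2 (rpow_pos_of_pos hx p)).ne'

theorem truncPow_ne_top (p x : ℝ) : truncPow p x ≠ ∞ := by
  unfold truncPow
  split_ifs
  exacts [ENNReal.ofReal_ne_top, ENNReal.zero_ne_top]

@[fun_prop]
theorem measurable_truncPow (p : ℝ) : Measurable (truncPow p) :=
  Measurable.ite measurableSet_Ioi (by fun_prop) measurable_const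

theorem toReal_truncPow (p : ℝ) (hx : 0 < x) : (truncPow p x).toReal = x ^ p := by
  rw [truncPow_of_pos p hx, ENNReal.toReal_ofReal (rpow_nonneg hx.le p)]

theorem truncPow_mul_left (p : ℝ) (hc : 0 < c) (x : ℝ) :
    truncPow p (c * x) = truncPow p c * truncPow p x := by
  rcases le_or_gt x 0 with hx | hx
  · rw [truncPow_of_nonpos p hx, truncPow_of_nonpos p (mul_nonpos_of_nonneg_of_nonpos hc.le hx),
      mul_zero]
  · rw [truncPow_of_pos p hc, truncPow_of_pos p hx, truncPow_of_pos p (mul_pos hc hx),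
      mul_rpow hc.le hx.le, ENNReal.ofReal_mul (by positivity)]

theorem truncPow_mul_truncPow (p q x : ℝ) : truncPow p x * truncPow q x = truncPow (p + q) x := by
  rcases le_or_gt x 0 with hx | hx
  · simp only [truncPow_of_nonpos _ hx, zero_mul]
  · rw [truncPow_of_pos p hx, truncPow_of_pos q hx, truncPow_of_pos (p + q) hx, rpow_add hx,
      ENNReal.ofReal_mul (by positivity)]

theorem truncPow_mul_truncPow_zero (p : ℝ) (h : 0 < x → 0 < y) :
    truncPow p x * truncPow 0 y = truncPow p x := by
  rcases le_or_gt x 0 with hx | hx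
  · rw [truncPow_of_nonpos p hx, zero_mul]
  · rw [truncPow_zero_of_pos (h hx), mul_one]

theorem truncPow_mul_truncPow_eq_zero (p q : ℝ) (h : x + y ≤ 0) :
    truncPow p x * truncPow q y = 0 := by
  rcases le_or_gt x 0 with hx | hx
  · rw [truncPow_of_nonpos p hx, zero_mul]
  · rw [truncPow_of_nonpos q (by linarith), mul_zero]

end TruncatedPower

section ChangeOfVariables

variable {c : ℝ}

theorem lintegral_eq_mul_lintegral_add_mul (f : ℝ → ℝ≥0∞) (b : ℝ) (hc : c ≠ 0) :
    ∫⁻ x, f x = ENNReal.ofReal |c| * ∫⁻ x, f (b + c * x) := by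
  rw [← lintegral_add_left_eq_self f b]
  conv_lhs => rw [← smul_map_volume_mul_left hc]
  rw [lintegral_smul_measure, smul_eq_mul]
  exact congrArg _
    (lintegral_map_equiv (fun x => f (b + x)) (Homeomorph.mulLeft₀ c hc).toMeasurableEquiv)

theorem lintegral_eq_truncPow_mul_lintegral_add_mul (f : ℝ → ℝ≥0∞) (b : ℝ) (hc : 0 < c) :
    ∫⁻ x, f x = truncPow 1 c * ∫⁻ x, f (b + c * x) := by
  rw [lintegral_eq_mul_lintegral_add_mul f b hc.ne', abs_of_pos hc, truncPow_of_pos 1 hc, rpow_one]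

theorem lintegral_eq_truncPow_mul_lintegral_sub_mul (f : ℝ → ℝ≥0∞) (b : ℝ) (hc : 0 < c) :
    ∫⁻ x, f x = truncPow 1 c * ∫⁻ x, f (b - c * x) := by
  simp_rw [lintegral_eq_mul_lintegral_add_mul f b (neg_ne_zero.2 hc.ne'), abs_neg, abs_of_pos hc,
    truncPow_of_pos 1 hc, rpow_one, neg_mul, ← sub_eq_add_neg]

theorem lintegral_lintegral_eq_truncPow_mul_add_mul (f : ℝ → ℝ → ℝ≥0∞) (b : ℝ) (hc : 0 < c) :
    ∫⁻ x, ∫⁻ y, f x y = truncPow 2 c * ∫⁻ x, ∫⁻ y, f (b + c * x) (b + c * y) := by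
  rw [lintegral_eq_truncPow_mul_lintegral_add_mul _ b hc,
    lintegral_congr fun x => lintegral_eq_truncPow_mul_lintegral_add_mul (f (b + c * x)) b hc,
    lintegral_const_mul' _ _ (truncPow_ne_top 1 c), ← mul_assoc, truncPow_mul_truncPow,
    one_add_one_eq_two]

theorem lintegral_lintegral_eq_truncPow_mul_sub_mul (f : ℝ → ℝ → ℝ≥0∞) (b : ℝ) (hc : 0 < c) :
    ∫⁻ x, ∫⁻ y, f x y = truncPow 2 c * ∫⁻ x, ∫⁻ y, f (b - c * x) (b - c * y) := by
  rw [lintegral_eq_truncPow_mul_lintegral_sub_mul _ b hc,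
    lintegral_congr fun x => lintegral_eq_truncPow_mul_lintegral_sub_mul (f (b - c * x)) b hc,
    lintegral_const_mul' _ _ (truncPow_ne_top 1 c), ← mul_assoc, truncPow_mul_truncPow,
    one_add_one_eq_two]

end ChangeOfVariables

section BetaIntegral

variable {a b c z : ℝ}

theorem beta_one_right (ha : 0 < a) : beta a 1 = 1 / a := by
  rw [beta, Gamma_one, mul_one, Gamma_add_one ha.ne',
    div_mul_cancel_right₀ (Gamma_pos_of_pos ha).ne', one_div]

theorem beta_one_left (ha : 0 < a) : beta 1 a = 1 / a := by
  rw [← beta_one_right ha, beta, beta, mul_comm, add_comm]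

theorem truncPow_mul_truncPow_one_sub (ha : 0 < a) (hb : 0 < b) (x : ℝ) :
    truncPow (a - 1) x * truncPow (b - 1) (1 - x) = ENNReal.ofReal (beta a b) * betaPDF a b x := by
  rcases le_or_gt x 0 with hx0 | hx0
  · rw [truncPow_of_nonpos _ hx0, betaPDF_eq_zero_of_nonpos hx0, zero_mul, mul_zero]
  rcases le_or_gt 1 x with hx1 | hx1
  · rw [truncPow_of_nonpos _ (sub_nonpos.2 hx1), betaPDF_eq_zero_of_one_le hx1, mul_zero, mul_zero]
  have hB := beta_pos ha hb
  rw [betaPDF_of_pos_lt_one hx0 hx1, truncPow_of_pos _ hx0, truncPow_of_pos _ (sub_pos.2 hx1),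
    ← ENNReal.ofReal_mul (by positivity), ← ENNReal.ofReal_mul hB.le]
  congr 1
  field_simp

theorem lintegral_truncPow_mul_truncPow_one_sub_mul (ha : 0 < a) (hb : 0 < b) (F : ℝ → ℝ≥0∞) :
    ∫⁻ x, truncPow (a - 1) x * truncPow (b - 1) (1 - x) * F x =
      ENNReal.ofReal (beta a b) * ∫⁻ x, F x ∂betaMeasure a b := by
  rw [betaMeasure, lintegral_withDensity_eq_lintegral_mul_non_measurable _ (measurable_betaPDF a b)
    (.of_forall fun _ => ENNReal.ofReal_lt_top), ← lintegral_const_mul' _ _ ENNReal.ofReal_ne_top]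
  refine lintegral_congr fun x => ?_
  rw [truncPow_mul_truncPow_one_sub ha hb, mul_assoc, Pi.mul_apply]

theorem lintegral_truncPow_mul_truncPow_one_sub (ha : 0 < a) (hb : 0 < b) :
    ∫⁻ x, truncPow (a - 1) x * truncPow (b - 1) (1 - x) = ENNReal.ofReal (beta a b) := by
  rw [lintegral_congr (truncPow_mul_truncPow_one_sub ha hb),
    lintegral_const_mul' _ _ ENNReal.ofReal_ne_top, lintegral_betaPDF_eq_one ha hb, mul_one]

theorem lintegral_truncPow_mul_truncPow_sub (ha : 0 < a) (hb : 0 < b) (c : ℝ) :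
    ∫⁻ x, truncPow (a - 1) x * truncPow (b - 1) (c - x) =
      ENNReal.ofReal (beta a b) * truncPow (a + b - 1) c := by
  rcases le_or_gt c 0 with hc | hc
  · simp only [truncPow_mul_truncPow_eq_zero _ _ ((add_sub_cancel _ c).trans_le hc),
      truncPow_of_nonpos _ hc, lintegral_zero, mul_zero]
  have hscale (x : ℝ) : truncPow (a - 1) (0 + c * x) * truncPow (b - 1) (c - (0 + c * x)) =
      truncPow (a - 1 + (b - 1)) c * (truncPow (a - 1) x * truncPow (b - 1) (1 - x)) := by
    rw [zero_add, ← mul_one_sub, truncPow_mul_left _ hc, truncPow_mul_left _ hc,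
      ← truncPow_mul_truncPow]
    ring
  rw [lintegral_eq_truncPow_mul_lintegral_add_mul _ 0 hc, lintegral_congr hscale,
    lintegral_const_mul' _ _ (truncPow_ne_top _ c), lintegral_truncPow_mul_truncPow_one_sub ha hb,
    ← mul_assoc, truncPow_mul_truncPow, mul_comm]
  ring_nf

theorem lintegral_truncPow_one_sub_mul_betaMeasure (q : ℝ) (ha : 0 < a) (hb : 0 < b)
    (hz : |z| < 1) :
    ∫⁻ x, truncPow q (1 - z * x) ∂betaMeasure a b = ENNReal.ofReal (hyp2F1 a (-q) (a + b) z) := by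
  have hint := integrable_one_sub_mul_rpow_neg (-q) ha hb hz
  have heval := integral_one_sub_mul_rpow_neg (-q) ha hb hz
  rw [neg_neg] at hint heval
  rw [← heval, ofReal_integral_eq_lintegral_ofReal hint (one_sub_mul_rpow_nonneg_ae q a b hz)]
  exact lintegral_congr_ae ((ae_betaMeasure_mem_Ioo a b).mono fun x hx =>
    truncPow_of_pos q (one_sub_mul_pos hz hx))

theorem lintegral_hyp2F1_betaMeasure {a' b' s : ℝ} (ha : 0 < a) (hb : 0 < b) (ha' : 0 < a')
    (hb' : 0 < b') (h : s < b + b') :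
    ∫⁻ x, ENNReal.ofReal (hyp2F1 a' s (a' + b') x) ∂betaMeasure a b =
      ENNReal.ofReal (hyp3F2 a a' s (a + b) (a' + b') 1) := by
  rw [← ofReal_integral_eq_lintegral_ofReal (integrable_hyp2F1_betaMeasure ha hb (by linarith))
    (hyp2F1_nonneg_ae s ha' hb' a b), integral_hyp2F1_betaMeasure ha hb (by linarith)]

theorem lintegral_truncPow_euler (q : ℝ) (ha : 0 < a) (hb : 0 < b) (hz : |z| < 1) :
    ∫⁻ x, truncPow (a - 1) x * truncPow (b - 1) (1 - x) * truncPow q (1 - z * x) =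
      ENNReal.ofReal (beta a b) * ENNReal.ofReal (hyp2F1 a (-q) (a + b) z) := by
  rw [lintegral_truncPow_mul_truncPow_one_sub_mul ha hb,
    lintegral_truncPow_one_sub_mul_betaMeasure q ha hb hz]

theorem lintegral_truncPow_sub_mul_one_sub_mul {v w : ℝ} (q : ℝ) (hb : 0 < b) (hw : 0 < 1 - w)
    (hvw : 0 < 1 - v * w) (hz : |v * (1 - w) / (1 - v * w)| < 1) :
    ∫⁻ s, truncPow 0 (s - w) * truncPow (b - 1) (1 - s) * truncPow q (1 - v * s) =
      truncPow b (1 - w) * truncPow q (1 - v * w) * (ENNReal.ofReal (1 / b) *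
        ENNReal.ofReal (hyp2F1 1 (-q) (1 + b) (v * (1 - w) / (1 - v * w)))) := by
  have hpow : truncPow b (1 - w) = truncPow 1 (1 - w) * truncPow (b - 1) (1 - w) := by
    rw [truncPow_mul_truncPow, add_sub_cancel]
  have hfactor (t : ℝ) : 1 - v * (w + (1 - w) * t) =
      (1 - v * w) * (1 - v * (1 - w) / (1 - v * w) * t) := by
    field_simp
    ring
  have hscale (t : ℝ) : truncPow 0 (w + (1 - w) * t - w) *
      truncPow (b - 1) (1 - (w + (1 - w) * t)) * truncPow q (1 - v * (w + (1 - w) * t)) =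
      truncPow (b - 1) (1 - w) * truncPow q (1 - v * w) *
        (truncPow (1 - 1) t * truncPow (b - 1) (1 - t) *
          truncPow q (1 - v * (1 - w) / (1 - v * w) * t)) := by
    rw [hfactor, add_sub_cancel_left, ← sub_sub, ← mul_one_sub, truncPow_mul_left _ hw,
      truncPow_mul_left _ hw, truncPow_mul_left _ hvw, truncPow_zero_of_pos hw, sub_self]
    ring
  rw [lintegral_eq_truncPow_mul_lintegral_add_mul _ w hw, lintegral_congr hscale,
    lintegral_const_mul _ (by fun_prop), lintegral_truncPow_euler q one_pos hb hz,
    beta_one_left hb, hpow]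
  ring

end BetaIntegral

section Tonelli

variable {α β γ : Type*} [MeasurableSpace α] [MeasurableSpace β] [MeasurableSpace γ]

theorem lintegral_rotate {μ : Measure α} {ν : Measure β} {ξ : Measure γ} [SFinite μ] [SFinite ν]
    [SFinite ξ] {f : α → β → γ → ℝ≥0∞} (hf : Measurable fun p : α × β × γ => f p.1 p.2.1 p.2.2) :
    ∫⁻ a, ∫⁻ b, ∫⁻ c, f a b c ∂ξ ∂ν ∂μ = ∫⁻ c, ∫⁻ a, ∫⁻ b, f a b c ∂ν ∂μ ∂ξ := by
  have hinner : Measurable fun q : (α × γ) × β => f q.1.1 q.2 q.1.2 :=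
    hf.comp (g := fun p : α × β × γ => f p.1 p.2.1 p.2.2)
      (f := fun q : (α × γ) × β => (q.1.1, q.2, q.1.2)) (by fun_prop)
  calc ∫⁻ a, ∫⁻ b, ∫⁻ c, f a b c ∂ξ ∂ν ∂μ = ∫⁻ a, ∫⁻ c, ∫⁻ b, f a b c ∂ν ∂ξ ∂μ :=
        lintegral_congr fun a =>
          lintegral_lintegral_swap (hf.comp measurable_prodMk_left).aemeasurable
    _ = ∫⁻ c, ∫⁻ a, ∫⁻ b, f a b c ∂ν ∂μ ∂ξ :=
        lintegral_lintegral_swap hinner.lintegral_prod_right'.aemeasurable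

end Tonelli

section SimplexIntegral

/-- The integral of `a ^ α * c ^ p * (c - a) ^ r * (1 - a) ^ q * (1 - c) ^ β` over the triangle
`0 < a < c < 1`, the double Euler integral behind `₃F₂(1)`. -/
noncomputable def simplexIntegral (α p r q β : ℝ) : ℝ≥0∞ :=
  ∫⁻ c, ∫⁻ a, truncPow α a * truncPow p c * truncPow r (c - a) * truncPow q (1 - a) *
    truncPow β (1 - c)

theorem simplexIntegral_symm (α p r q β : ℝ) :
    simplexIntegral α p r q β = simplexIntegral β q r p α := by
  have hreflect (f : ℝ → ℝ≥0∞) : ∫⁻ x, f x = ∫⁻ x, f (1 - x) :=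
    (lintegral_sub_left_eq_self f 1).symm
  unfold simplexIntegral
  rw [hreflect, lintegral_congr fun c => hreflect _, lintegral_lintegral_swap (by fun_prop)]
  refine lintegral_congr fun c => lintegral_congr fun a => ?_
  rw [sub_sub_cancel, sub_sub_cancel, sub_sub_sub_cancel_left]
  ring

variable {a b a' b' s : ℝ}

theorem lintegral_simplex_slice (ha' : 0 < a') (hb' : 0 < b') (a b s c : ℝ) :
    ∫⁻ x, truncPow (a' - 1) x * truncPow (a - a' - b') c * truncPow (b' - 1) (c - x) *
        truncPow (-s) (1 - x) * truncPow (b - 1) (1 - c) =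
      ENNReal.ofReal (beta a' b') * (truncPow (a - 1) c * truncPow (b - 1) (1 - c) *
        ENNReal.ofReal (hyp2F1 a' s (a' + b') c)) := by
  rcases le_or_gt c 0 with hc0 | hc0
  · simp [truncPow_of_nonpos _ hc0]
  rcases le_or_gt (1 - c) 0 with hc1 | hc1
  · simp [truncPow_of_nonpos _ hc1]
  have hc : |c| < 1 := by rw [abs_of_pos hc0]; linarith
  have hpow : truncPow (a - 1) c = truncPow 1 c * truncPow (a' - 1) c * truncPow (a - a' - b') c *
      truncPow (b' - 1) c := by
    simp only [truncPow_mul_truncPow]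
    ring_nf
  have hscale (t : ℝ) : truncPow (a' - 1) (0 + c * t) * truncPow (a - a' - b') c *
      truncPow (b' - 1) (c - (0 + c * t)) * truncPow (-s) (1 - (0 + c * t)) *
      truncPow (b - 1) (1 - c) =
      truncPow (a' - 1) c * truncPow (a - a' - b') c * truncPow (b' - 1) c *
        truncPow (b - 1) (1 - c) *
        (truncPow (a' - 1) t * truncPow (b' - 1) (1 - t) * truncPow (-s) (1 - c * t)) := by
    rw [zero_add, ← mul_one_sub, truncPow_mul_left _ hc0, truncPow_mul_left _ hc0]
    ring
  rw [lintegral_eq_truncPow_mul_lintegral_add_mul _ 0 hc0, lintegral_congr hscale,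
    lintegral_const_mul _ (by fun_prop), lintegral_truncPow_euler _ ha' hb' hc, neg_neg, hpow]
  ring

theorem simplexIntegral_eq_hyp3F2 (ha : 0 < a) (hb : 0 < b) (ha' : 0 < a') (hb' : 0 < b')
    (h : s < b + b') :
    simplexIntegral (a' - 1) (a - a' - b') (b' - 1) (-s) (b - 1) =
      ENNReal.ofReal (beta a' b' * (beta a b * hyp3F2 a a' s (a + b) (a' + b') 1)) := by
  rw [simplexIntegral, lintegral_congr (lintegral_simplex_slice ha' hb' a b s),
    lintegral_const_mul' _ _ ENNReal.ofReal_ne_top,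
    lintegral_truncPow_mul_truncPow_one_sub_mul ha hb, lintegral_hyp2F1_betaMeasure ha hb ha' hb' h,
    ENNReal.ofReal_mul (beta_pos ha' hb').le, ENNReal.ofReal_mul (beta_pos ha hb).le]

theorem simplexIntegral_zero_zero {d : ℝ} (hd : d < 1) (hs : s < 2 - d) :
    simplexIntegral 0 (-d) (-d) (-s) 0 =
      ENNReal.ofReal (1 / ((1 - d) * (2 - 2 * d)) *
        hyp3F2 (2 - 2 * d) 1 s (3 - 2 * d) (2 - d) 1) := by
  have h := simplexIntegral_eq_hyp3F2 (a := 2 - 2 * d) (b := 1) (a' := 1) (b' := 1 - d) (s := s)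
    (by linarith) one_pos one_pos (by linarith) (by linarith)
  rw [beta_one_left (by linarith), beta_one_right (by linarith)] at h
  rw [← one_div_mul_one_div, mul_assoc]
  convert! h using 2 <;> ring_nf

end SimplexIntegral

section Pentagon

variable {d a b c y₁ y₂ y₃ y₄ : ℝ}

/-- The cyclic product of `-d`-th powers of the differences of `0, y₂, y₄, y₁, y₃` (the sides of a
pentagon), on the region `0 < y₁ < y₂ < y₄ < y₃`. -/
noncomputable def pentagonKernel (d y₁ y₂ y₃ y₄ : ℝ) : ℝ≥0∞ :=
  truncPow 0 y₁ * truncPow 0 (y₂ - y₁) * truncPow 0 (y₃ - y₄) *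
    (truncPow (-d) y₂ * truncPow (-d) (y₄ - y₂) * truncPow (-d) (y₄ - y₁) *
      truncPow (-d) (y₃ - y₁) * truncPow (-d) y₃)

theorem pentagonKernel_mul_left (d : ℝ) (hc : 0 < c) (y₁ y₂ y₃ y₄ : ℝ) :
    pentagonKernel d (c * y₁) (c * y₂) (c * y₃) (c * y₄) =
      truncPow (-(5 * d)) c * pentagonKernel d y₁ y₂ y₃ y₄ := by
  have hpow : truncPow (-(5 * d)) c = truncPow (-d) c * truncPow (-d) c * truncPow (-d) c *
      truncPow (-d) c * truncPow (-d) c := by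
    simp only [truncPow_mul_truncPow]
    ring_nf
  simp only [pentagonKernel, ← mul_sub, truncPow_mul_left _ hc, truncPow_zero_of_pos hc, hpow]
  ring

theorem pentagonKernel_of_nonpos (hy : y₃ ≤ 0) : pentagonKernel d y₁ y₂ y₃ y₄ = 0 := by
  rw [pentagonKernel, truncPow_of_nonpos _ hy, mul_zero, mul_zero]

@[fun_prop]
theorem measurable_pentagonKernel (d : ℝ) :
    Measurable fun p : ℝ × ℝ × ℝ × ℝ => pentagonKernel d p.1 p.2.1 p.2.2.1 p.2.2.2 := by
  unfold pentagonKernel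
  fun_prop

theorem lintegral_pentagonKernel_slice (d y : ℝ) :
    ∫⁻ y₁, ∫⁻ y₂, ∫⁻ y₄, pentagonKernel d y₁ y₂ y y₄ =
      truncPow (3 - 5 * d) y * ∫⁻ a, ∫⁻ b, ∫⁻ c, pentagonKernel d a b 1 c := by
  rcases le_or_gt y 0 with hy | hy
  · simp only [pentagonKernel_of_nonpos hy, truncPow_of_nonpos _ hy, lintegral_zero, zero_mul]
  have hscale (a b c : ℝ) : pentagonKernel d (0 + y * a) (0 + y * b) y (0 + y * c) =
      truncPow (-(5 * d)) y * pentagonKernel d a b 1 c := by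
    simpa only [zero_add, mul_one] using pentagonKernel_mul_left d hy a b 1 c
  have hpow : truncPow (3 - 5 * d) y = truncPow 1 y * truncPow 2 y * truncPow (-(5 * d)) y := by
    simp only [truncPow_mul_truncPow]
    ring_nf
  rw [lintegral_eq_truncPow_mul_lintegral_add_mul _ 0 hy]
  simp_rw [lintegral_lintegral_eq_truncPow_mul_add_mul
    (fun y₂ y₄ => pentagonKernel d _ y₂ y y₄) 0 hy, hscale,
    lintegral_const_mul' _ _ (truncPow_ne_top _ y), hpow, mul_assoc]

theorem lintegral_pentagonKernel (hd : d < 4 / 5) :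
    ∫⁻ y₁, ∫⁻ y₂, ∫⁻ y₃, ∫⁻ y₄, truncPow 0 (1 - y₃) * pentagonKernel d y₁ y₂ y₃ y₄ =
      ENNReal.ofReal (1 / (4 - 5 * d)) * ∫⁻ a, ∫⁻ b, ∫⁻ c, pentagonKernel d a b 1 c := by
  have hd' : 0 < 4 - 5 * d := by linarith
  have hslice (y : ℝ) :
      ∫⁻ y₁, ∫⁻ y₂, ∫⁻ y₄, truncPow 0 (1 - y) * pentagonKernel d y₁ y₂ y y₄ =
        truncPow (4 - 5 * d - 1) y * truncPow (1 - 1) (1 - y) *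
          ∫⁻ a, ∫⁻ b, ∫⁻ c, pentagonKernel d a b 1 c := by
    simp_rw [lintegral_const_mul' _ _ (truncPow_ne_top 0 _)]
    rw [lintegral_pentagonKernel_slice, show 4 - 5 * d - 1 = 3 - 5 * d by ring, sub_self,
      ← mul_assoc, mul_comm (truncPow 0 _)]
  rw [lintegral_rotate (by fun_prop), lintegral_congr hslice, lintegral_mul_const _ (by fun_prop),
    lintegral_truncPow_mul_truncPow_one_sub hd' one_pos, beta_one_right hd']

theorem lintegral_truncPow_zero_sub_add {h : ℝ → ℝ → ℝ → ℝ≥0∞}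
    (hh : Measurable fun p : ℝ × ℝ × ℝ => h p.1 p.2.1 p.2.2) :
    (∫⁻ a, ∫⁻ b, ∫⁻ c, truncPow 0 (b - a) * h a b c) +
      ∫⁻ a, ∫⁻ b, ∫⁻ c, truncPow 0 (a - b) * h a b c = ∫⁻ a, ∫⁻ b, ∫⁻ c, h a b c := by
  have hsum {a b : ℝ} (hab : b ≠ a) : truncPow 0 (b - a) + truncPow 0 (a - b) = 1 := by
    rcases hab.lt_or_gt with hlt | hlt
    · rw [truncPow_of_nonpos 0 (sub_neg.2 hlt).le, truncPow_zero_of_pos (sub_pos.2 hlt), zero_add]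
    · rw [truncPow_of_nonpos 0 (sub_neg.2 hlt).le, truncPow_zero_of_pos (sub_pos.2 hlt), add_zero]
  simp_rw [lintegral_const_mul' _ _ (truncPow_ne_top 0 _)]
  rw [← lintegral_add_left (by fun_prop)]
  refine lintegral_congr fun a => ?_
  rw [← lintegral_add_left (by fun_prop)]
  refine lintegral_congr_ae ((Measure.ae_ne volume a).mono fun b hb => ?_)
  simp only [← add_mul, hsum hb, one_mul]

/-- The pentagon kernel at `y₃ = 1`, in the variables `a = y₁`, `b = y₂`, `c = y₄`, with the
constraint `a < b` dropped. -/
noncomputable def relaxedPentagonKernel (d a b c : ℝ) : ℝ≥0∞ :=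
  truncPow 0 a * truncPow 0 (1 - c) *
    (truncPow (-d) b * truncPow (-d) (c - b) * truncPow (-d) (c - a) * truncPow (-d) (1 - a))

@[fun_prop]
theorem measurable_relaxedPentagonKernel (d : ℝ) :
    Measurable fun p : ℝ × ℝ × ℝ => relaxedPentagonKernel d p.1 p.2.1 p.2.2 := by
  unfold relaxedPentagonKernel
  fun_prop

theorem pentagonKernel_one (d a b c : ℝ) :
    pentagonKernel d a b 1 c = truncPow 0 (b - a) * relaxedPentagonKernel d a b c := by
  rw [pentagonKernel, relaxedPentagonKernel, truncPow_of_pos (-d) one_pos, one_rpow,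
    ENNReal.ofReal_one]
  ring

theorem lintegral_relaxedPentagonKernel (hd : d < 1) :
    ∫⁻ a, ∫⁻ b, ∫⁻ c, relaxedPentagonKernel d a b c =
      ENNReal.ofReal (beta (1 - d) (1 - d)) * simplexIntegral 0 (-d) (-d) (1 - 2 * d) 0 := by
  have hd' : 0 < 1 - d := sub_pos.2 hd
  have hbeta (c : ℝ) : ∫⁻ b, truncPow (-d) b * truncPow (-d) (c - b) =
      ENNReal.ofReal (beta (1 - d) (1 - d)) * truncPow (1 - 2 * d) c := by
    have h := lintegral_truncPow_mul_truncPow_sub hd' hd' c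
    rwa [sub_sub_cancel_left, show 1 - d + (1 - d) - 1 = 1 - 2 * d by ring] at h
  have hslice (c a : ℝ) : ∫⁻ b, relaxedPentagonKernel d a b c =
      ENNReal.ofReal (beta (1 - d) (1 - d)) * (truncPow 0 a * truncPow (1 - 2 * d) c *
        truncPow (-d) (c - a) * truncPow (-d) (1 - a) * truncPow 0 (1 - c)) := by
    have hfactor (b : ℝ) : relaxedPentagonKernel d a b c =
        truncPow 0 a * truncPow 0 (1 - c) * truncPow (-d) (c - a) * truncPow (-d) (1 - a) *
          (truncPow (-d) b * truncPow (-d) (c - b)) := by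
      rw [relaxedPentagonKernel]
      ring
    rw [lintegral_congr hfactor, lintegral_const_mul _ (by fun_prop), hbeta]
    ring
  rw [simplexIntegral_symm, simplexIntegral, lintegral_rotate (by fun_prop)]
  simp_rw [hslice, lintegral_const_mul' _ _ ENNReal.ofReal_ne_top]

theorem relaxedPentagonKernel_of_nonpos (hb : b ≤ 0) : relaxedPentagonKernel d a b c = 0 := by
  simp only [relaxedPentagonKernel, truncPow_of_nonpos _ hb, zero_mul, mul_zero]

theorem relaxedPentagonKernel_of_one_le (hb : 1 ≤ b) : relaxedPentagonKernel d a b c = 0 := by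
  have hzero : truncPow 0 (1 - c) * truncPow (-d) (c - b) = 0 :=
    truncPow_mul_truncPow_eq_zero _ _ (by linarith)
  calc relaxedPentagonKernel d a b c = truncPow 0 a * truncPow (-d) b * truncPow (-d) (c - a) *
        truncPow (-d) (1 - a) * (truncPow 0 (1 - c) * truncPow (-d) (c - b)) := by
        rw [relaxedPentagonKernel]
        ring
    _ = 0 := by rw [hzero, mul_zero]

theorem truncPow_mul_relaxedPentagonKernel_add_mul (d : ℝ) (hb0 : 0 < b) (hb1 : 0 < 1 - b)
    (a c : ℝ) :
    truncPow 0 (b + (1 - b) * a - b) *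
        relaxedPentagonKernel d (b + (1 - b) * a) b (b + (1 - b) * c) =
      truncPow (-d) b * truncPow (-(3 * d)) (1 - b) *
        (truncPow 0 a * truncPow (-d) c * truncPow (-d) (c - a) * truncPow (-d) (1 - a) *
          truncPow 0 (1 - c)) := by
  have hpos : truncPow 0 a * truncPow 0 (b + (1 - b) * a) = truncPow 0 a :=
    truncPow_mul_truncPow_zero 0 fun ha => by positivity
  have hpow : truncPow (-(3 * d)) (1 - b) =
      truncPow (-d) (1 - b) * truncPow (-d) (1 - b) * truncPow (-d) (1 - b) := by
    simp only [truncPow_mul_truncPow]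
    ring_nf
  rw [relaxedPentagonKernel, add_sub_cancel_left, add_sub_cancel_left, add_sub_add_left_eq_sub,
    ← mul_sub, ← sub_sub, ← sub_sub, ← mul_one_sub, ← mul_one_sub, ← hpos, hpow]
  simp only [truncPow_mul_left _ hb1, truncPow_zero_of_pos hb1, one_mul]
  ring

theorem lintegral_truncPow_mul_relaxedPentagonKernel_slice (d b : ℝ) :
    ∫⁻ c, ∫⁻ a, truncPow 0 (a - b) * relaxedPentagonKernel d a b c =
      truncPow (-d) b * truncPow (2 - 3 * d) (1 - b) * simplexIntegral 0 (-d) (-d) (-d) 0 := by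
  rcases le_or_gt b 0 with hb0 | hb0
  · simp only [relaxedPentagonKernel_of_nonpos hb0, truncPow_of_nonpos _ hb0, lintegral_zero,
      mul_zero, zero_mul]
  rcases le_or_gt 1 b with hb1 | hb1
  · simp only [relaxedPentagonKernel_of_one_le hb1, truncPow_of_nonpos _ (sub_nonpos.2 hb1),
      lintegral_zero, mul_zero, zero_mul]
  have hb1' : 0 < 1 - b := sub_pos.2 hb1
  have hpow : truncPow (2 - 3 * d) (1 - b) =
      truncPow 2 (1 - b) * truncPow (-(3 * d)) (1 - b) := by
    rw [truncPow_mul_truncPow, sub_eq_add_neg]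
  rw [lintegral_lintegral_eq_truncPow_mul_add_mul _ b hb1', lintegral_congr fun c =>
      lintegral_congr fun a => truncPow_mul_relaxedPentagonKernel_add_mul d hb0 hb1' a c,
    lintegral_congr fun c => lintegral_const_mul _ (by fun_prop),
    lintegral_const_mul _ (by fun_prop), hpow, simplexIntegral]
  ring

theorem lintegral_truncPow_mul_relaxedPentagonKernel (hd : d < 1) :
    ∫⁻ a, ∫⁻ b, ∫⁻ c, truncPow 0 (a - b) * relaxedPentagonKernel d a b c =
      ENNReal.ofReal (beta (1 - d) (3 - 3 * d)) * simplexIntegral 0 (-d) (-d) (-d) 0 := by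
  have hbeta : ∫⁻ b, truncPow (-d) b * truncPow (2 - 3 * d) (1 - b) =
      ENNReal.ofReal (beta (1 - d) (3 - 3 * d)) := by
    have h := lintegral_truncPow_mul_truncPow_one_sub (sub_pos.2 hd)
      (show 0 < 3 - 3 * d by linarith)
    rwa [sub_sub_cancel_left, show 3 - 3 * d - 1 = 2 - 3 * d by ring] at h
  rw [lintegral_rotate (by fun_prop), lintegral_rotate (by fun_prop)]
  simp_rw [lintegral_truncPow_mul_relaxedPentagonKernel_slice]
  rw [lintegral_mul_const _ (by fun_prop), hbeta]

theorem truncPow_mul_pentagonKernel_of_one_le (h : 1 ≤ y₁ ∨ 1 ≤ y₂) :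
    truncPow 0 (1 - y₃) * pentagonKernel d y₁ y₂ y₃ y₄ = 0 := by
  by_contra hne
  simp only [pentagonKernel, ← ne_eq, mul_ne_zero_iff, truncPow_ne_zero_iff] at hne
  rcases h with h | h <;> linarith [hne.1, hne.2.1.1.2, hne.2.1.2, hne.2.2.1.1.1.2]

end Pentagon

section Cube

variable {d u v w : ℝ}

/-- The pentagon kernel in the coordinates `y₁ = 1 - u`, `y₂ = 1 - u * v`, `y₃ = 1 - u * v * w`,
`y₄ = 1 - u * v * s`, Jacobian included. -/
noncomputable def cubeKernel (d u v w s : ℝ) : ℝ≥0∞ :=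
  truncPow (3 - 3 * d) u * truncPow (2 - d) v * truncPow 0 (1 - u) * truncPow 0 (1 - v) *
    truncPow 0 w * truncPow (-d) (1 - u * v) * truncPow (-d) (1 - v * w) *
    truncPow (-d) (1 - u * v * w) *
    (truncPow 0 (s - w) * truncPow (-d) (1 - s) * truncPow (-d) (1 - v * s))

@[fun_prop]
theorem measurable_cubeKernel (d : ℝ) :
    Measurable fun p : ((ℝ × ℝ) × ℝ) × ℝ => cubeKernel d p.1.1.1 p.1.1.2 p.1.2 p.2 := by
  unfold cubeKernel
  fun_prop

theorem truncPow_mul_pentagonKernel_one_sub_mul (d : ℝ) (hu : 0 < u) (hv : 0 < v) (w s : ℝ) :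
    truncPow 1 u * truncPow 2 (u * v) * (truncPow 0 (1 - (1 - u * v * w)) *
        pentagonKernel d (1 - u) (1 - u * v) (1 - u * v * w) (1 - u * v * s)) =
      cubeKernel d u v w s := by
  have hu' : truncPow (3 - 3 * d) u = truncPow 1 u * truncPow 2 u * truncPow (-d) u *
      truncPow (-d) u * truncPow (-d) u := by
    simp only [truncPow_mul_truncPow]
    ring_nf
  have hv' : truncPow (2 - d) v = truncPow 2 v * truncPow (-d) v := by
    simp only [truncPow_mul_truncPow]
    ring_nf
  rw [pentagonKernel, cubeKernel, sub_sub_cancel, sub_sub_sub_cancel_left, sub_sub_sub_cancel_left,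
    sub_sub_sub_cancel_left, sub_sub_sub_cancel_left, sub_sub_sub_cancel_left, ← mul_sub,
    ← mul_one_sub, ← mul_one_sub, mul_assoc u v s, mul_assoc u v w, ← mul_one_sub, ← mul_one_sub,
    hu', hv']
  simp only [truncPow_mul_left _ hu, truncPow_mul_left _ hv, truncPow_zero_of_pos hu,
    truncPow_zero_of_pos hv, one_mul, mul_assoc u v]
  ring

theorem cubeKernel_of_nonpos (h : u ≤ 0 ∨ v ≤ 0) (s : ℝ) : cubeKernel d u v w s = 0 := by
  rcases h with h | h <;> simp only [cubeKernel, truncPow_of_nonpos _ h, zero_mul, mul_zero]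

theorem lintegral_pentagonKernel_eq_lintegral_cubeKernel (d : ℝ) :
    ∫⁻ y₁, ∫⁻ y₂, ∫⁻ y₃, ∫⁻ y₄, truncPow 0 (1 - y₃) * pentagonKernel d y₁ y₂ y₃ y₄ =
      ∫⁻ u, ∫⁻ v, ∫⁻ w, ∫⁻ s, cubeKernel d u v w s := by
  rw [← lintegral_sub_left_eq_self _ 1]
  refine lintegral_congr fun u => ?_
  rcases le_or_gt u 0 with hu | hu
  · simp only [cubeKernel_of_nonpos (.inl hu), lintegral_zero,
      truncPow_mul_pentagonKernel_of_one_le (.inl (show 1 ≤ 1 - u by linarith))]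
  rw [lintegral_eq_truncPow_mul_lintegral_sub_mul _ 1 hu,
    ← lintegral_const_mul' _ _ (truncPow_ne_top 1 u)]
  refine lintegral_congr fun v => ?_
  rcases le_or_gt v 0 with hv | hv
  · have huv : 1 ≤ 1 - u * v := by nlinarith
    simp only [cubeKernel_of_nonpos (.inr hv), lintegral_zero, mul_zero,
      truncPow_mul_pentagonKernel_of_one_le (.inr huv)]
  simp_rw [lintegral_lintegral_eq_truncPow_mul_sub_mul
    (fun y₃ y₄ => truncPow 0 (1 - y₃) * pentagonKernel d (1 - u) (1 - u * v) y₃ y₄) 1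
    (mul_pos hu hv), ← truncPow_mul_pentagonKernel_one_sub_mul d hu hv,
    lintegral_const_mul' _ _ (ENNReal.mul_ne_top (truncPow_ne_top 1 u) (truncPow_ne_top 2 (u * v))),
    mul_assoc]

theorem lintegral_cubeKernel_of_notMem (h : u ∉ Set.Ioo 0 1 ∨ v ∉ Set.Ioo 0 1 ∨ w ∉ Set.Ioo 0 1) :
    ∫⁻ s, cubeKernel d u v w s = 0 := by
  have hzero (s : ℝ) : cubeKernel d u v w s = 0 := by
    by_contra hne
    simp only [cubeKernel, ← ne_eq, mul_ne_zero_iff, truncPow_ne_zero_iff] at hne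
    simp only [Set.mem_Ioo] at h
    grind
  simp only [hzero, lintegral_zero]

theorem abs_mul_one_sub_div_lt_one (hv : v ∈ Set.Ioo 0 1) (hw : w ∈ Set.Ioo 0 1) :
    |v * (1 - w) / (1 - v * w)| < 1 := by
  have hvw : 0 < 1 - v * w := by nlinarith [hv.1, hv.2, hw.2]
  rw [abs_of_nonneg (div_nonneg (by nlinarith [hv.1, hw.2]) hvw.le), div_lt_one hvw]
  linarith [hv.2]

theorem toReal_lintegral_cubeKernel (hd : d < 1) (hu : u ∈ Set.Ioo 0 1) (hv : v ∈ Set.Ioo 0 1)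
    (hw : w ∈ Set.Ioo 0 1) :
    (∫⁻ s, cubeKernel d u v w s).toReal =
      1 / (1 - d) * (u ^ (3 - 3 * d) * v ^ (2 - d) * (1 - u * v) ^ (-d) *
        (1 - v * w) ^ (-(2 * d)) * (1 - u * v * w) ^ (-d) * (1 - w) ^ (1 - d) *
        hyp2F1 1 d (2 - d) (v * (1 - w) / (1 - v * w))) := by
  have hd' : 0 < 1 - d := sub_pos.2 hd
  have hz := abs_mul_one_sub_div_lt_one hv hw
  obtain ⟨⟨hu0, hu1⟩, ⟨hv0, hv1⟩, ⟨hw0, hw1⟩⟩ := And.intro hu (And.intro hv hw)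
  have huv : 0 < 1 - u * v := by nlinarith
  have hvw : 0 < 1 - v * w := by nlinarith
  have huvw : 0 < 1 - u * v * w := by nlinarith [mul_pos hu0 hv0]
  have hinner := lintegral_truncPow_sub_mul_one_sub_mul (-d) hd' (sub_pos.2 hw1) hvw hz
  have hF := hyp2F1_nonneg d one_pos hd' hz
  rw [sub_sub_cancel_left, neg_neg] at hinner
  rw [show 1 + (1 - d) = 2 - d by ring] at hinner hF
  have hpow : (1 - v * w) ^ (-(2 * d)) = (1 - v * w) ^ (-d) * (1 - v * w) ^ (-d) := by
    rw [← rpow_add hvw]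
    ring_nf
  simp_rw [cubeKernel]
  rw [lintegral_const_mul _ (by fun_prop), hinner, truncPow_zero_of_pos (sub_pos.2 hu1),
    truncPow_zero_of_pos (sub_pos.2 hv1), truncPow_zero_of_pos hw0, hpow]
  simp only [ENNReal.toReal_mul, ENNReal.toReal_one, toReal_truncPow, hu0, hv0, huv, hvw, huvw,
    sub_pos.2 hw1, ENNReal.toReal_ofReal (one_div_nonneg.2 hd'.le), ENNReal.toReal_ofReal hF]
  ring

end Cube

section RealIntegral

theorem intervalIntegral_eq_integral_of_eqOn_Ioo {E : Type*} [NormedAddCommGroup E]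
    [NormedSpace ℝ E] {a b : ℝ} {f g : ℝ → E} (hab : a ≤ b) (hfg : Set.EqOn f g (Set.Ioo a b))
    (hg : ∀ x ∉ Set.Ioo a b, g x = 0) : ∫ x in a..b, f x = ∫ x, g x := by
  rw [intervalIntegral.integral_of_le hab, integral_Ioc_eq_integral_Ioo,
    setIntegral_congr_fun measurableSet_Ioo hfg, setIntegral_eq_integral_of_forall_compl_eq_zero hg]

variable {α β γ : Type*} [MeasurableSpace α] [MeasurableSpace β] [MeasurableSpace γ]

theorem integral_integral_integral_toReal {μ : Measure α} {ν : Measure β} {ξ : Measure γ}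
    [SFinite ν] [SFinite ξ] {f : α → β → γ → ℝ≥0∞}
    (hf : Measurable fun p : (α × β) × γ => f p.1.1 p.1.2 p.2)
    (hfin : ∫⁻ a, ∫⁻ b, ∫⁻ c, f a b c ∂ξ ∂ν ∂μ ≠ ∞) :
    ∫ a, ∫ b, ∫ c, (f a b c).toReal ∂ξ ∂ν ∂μ =
      (∫⁻ a, ∫⁻ b, ∫⁻ c, f a b c ∂ξ ∂ν ∂μ).toReal := by
  have hf₂ : Measurable fun p : α × β => ∫⁻ c, f p.1 p.2 c ∂ξ := hf.lintegral_prod_right'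
  have hf₁ : Measurable fun a => ∫⁻ b, ∫⁻ c, f a b c ∂ξ ∂ν := hf₂.lintegral_prod_right'
  have hfin₁ := ae_lt_top hf₁ hfin
  rw [← integral_toReal hf₁.aemeasurable hfin₁]
  refine integral_congr_ae (hfin₁.mono fun a ha => ?_)
  have hf₂a : Measurable fun b => ∫⁻ c, f a b c ∂ξ := hf₂.comp measurable_prodMk_left
  have hfin₂ := ae_lt_top hf₂a ha.ne
  simp only
  rw [← integral_toReal hf₂a.aemeasurable hfin₂]
  refine integral_congr_ae (hfin₂.mono fun b hb => ?_)
  have hf₃ : Measurable fun c => f a b c := hf.comp (measurable_prodMk_left (x := (a, b)))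
  exact integral_toReal hf₃.aemeasurable (ae_lt_top hf₃ hb.ne)

end RealIntegral

section Evaluation

variable {d : ℝ}

theorem integral_cube_eq_toReal_lintegral_cubeKernel (hd : d < 1)
    (hfin : ∫⁻ u, ∫⁻ v, ∫⁻ w, ∫⁻ s, cubeKernel d u v w s ≠ ∞) :
    ∫ u in (0:ℝ)..1, ∫ v in (0:ℝ)..1, ∫ w in (0:ℝ)..1,
        u ^ (3 - 3 * d) * v ^ (2 - d) * (1 - u * v) ^ (-d) * (1 - v * w) ^ (-(2 * d)) *
          (1 - u * v * w) ^ (-d) * (1 - w) ^ (1 - d) *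
          hyp2F1 1 d (2 - d) (v * (1 - w) / (1 - v * w)) =
      (1 - d) * (∫⁻ u, ∫⁻ v, ∫⁻ w, ∫⁻ s, cubeKernel d u v w s).toReal := by
  rw [← integral_integral_integral_toReal (by fun_prop) hfin, ← integral_const_mul]
  simp_rw [← integral_const_mul]
  have hd' : 1 - d ≠ 0 := (sub_pos.2 hd).ne'
  refine intervalIntegral_eq_integral_of_eqOn_Ioo zero_le_one (fun u hu => ?_) fun u hu => ?_
  · refine intervalIntegral_eq_integral_of_eqOn_Ioo zero_le_one (fun v hv => ?_) fun v hv => ?_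
    · refine intervalIntegral_eq_integral_of_eqOn_Ioo zero_le_one (fun w hw => ?_) fun w hw => ?_
      · simp only [toReal_lintegral_cubeKernel hd hu hv hw]
        rw [← mul_assoc, mul_one_div_cancel hd', one_mul]
      · simp [lintegral_cubeKernel_of_notMem (.inr (.inr hw))]
    · simp [lintegral_cubeKernel_of_notMem (.inr (.inl hv))]
  · simp [lintegral_cubeKernel_of_notMem (.inl hu)]

theorem lintegral_pentagonKernel_one_add (hd : d < 1) :
    (∫⁻ a, ∫⁻ b, ∫⁻ c, pentagonKernel d a b 1 c) + ENNReal.ofReal (beta (1 - d) (3 - 3 * d) *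
        (1 / ((1 - d) * (2 - 2 * d)) * hyp3F2 (2 - 2 * d) 1 d (3 - 2 * d) (2 - d) 1)) =
      ENNReal.ofReal (beta (1 - d) (1 - d) *
        (1 / ((1 - d) * (2 - 2 * d)) *
          hyp3F2 (2 - 2 * d) 1 (2 * d - 1) (3 - 2 * d) (2 - d) 1)) := by
  have hsplit := lintegral_truncPow_zero_sub_add (measurable_relaxedPentagonKernel d)
  simp_rw [← pentagonKernel_one] at hsplit
  have hS := simplexIntegral_zero_zero hd (s := 2 * d - 1) (by linarith)
  rw [neg_sub] at hS
  rwa [lintegral_truncPow_mul_relaxedPentagonKernel hd, lintegral_relaxedPentagonKernel hd, hS,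
    simplexIntegral_zero_zero hd (by linarith),
    ← ENNReal.ofReal_mul (beta_pos (by linarith) (by linarith)).le,
    ← ENNReal.ofReal_mul (beta_pos (by linarith) (by linarith)).le] at hsplit

theorem hyp3F2_two_sub_two_mul_nonneg {s : ℝ} (hd : d < 1) (hs : s < 2 - d) :
    0 ≤ hyp3F2 (2 - 2 * d) 1 s (3 - 2 * d) (2 - d) 1 := by
  have h := hyp3F2_one_nonneg (a := 2 - 2 * d) (b := 1) (a' := 1) (b' := 1 - d) (s := s)
    (by linarith) one_pos one_pos (by linarith) (by linarith)
  rwa [show 2 - 2 * d + 1 = 3 - 2 * d by ring, show 1 + (1 - d) = 2 - d by ring] at h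

theorem lintegral_pentagonKernel_one_ne_top (hd : d < 1) :
    ∫⁻ a, ∫⁻ b, ∫⁻ c, pentagonKernel d a b 1 c ≠ ∞ := fun htop => by
  have h := lintegral_pentagonKernel_one_add hd
  rw [htop, top_add] at h
  exact ENNReal.ofReal_ne_top h.symm

theorem toReal_lintegral_pentagonKernel_one (hd : d < 1) :
    (∫⁻ a, ∫⁻ b, ∫⁻ c, pentagonKernel d a b 1 c).toReal =
      beta (1 - d) (1 - d) *
        (1 / ((1 - d) * (2 - 2 * d)) * hyp3F2 (2 - 2 * d) 1 (2 * d - 1) (3 - 2 * d) (2 - d) 1) -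
      beta (1 - d) (3 - 3 * d) *
        (1 / ((1 - d) * (2 - 2 * d)) * hyp3F2 (2 - 2 * d) 1 d (3 - 2 * d) (2 - d) 1) := by
  have hd' : 0 < 1 - d := sub_pos.2 hd
  have h2 : 0 < 2 - 2 * d := by linarith
  have hB₁ := beta_pos hd' hd'
  have hB₂ := beta_pos hd' (show 0 < 3 - 3 * d by linarith)
  have hF₁ := hyp3F2_two_sub_two_mul_nonneg hd (s := 2 * d - 1) (by linarith)
  have hF₂ := hyp3F2_two_sub_two_mul_nonneg hd (s := d) (by linarith)
  have h := congrArg ENNReal.toReal (lintegral_pentagonKernel_one_add hd)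
  rw [ENNReal.toReal_add (lintegral_pentagonKernel_one_ne_top hd) ENNReal.ofReal_ne_top,
    ENNReal.toReal_ofReal (by positivity), ENNReal.toReal_ofReal (by positivity)] at h
  exact eq_sub_of_add_eq h

theorem Gamma_div_Gamma_one_add {x : ℝ} (hx : 0 < x) : Gamma x / Gamma (1 + x) = 1 / x := by
  rw [add_comm, Gamma_add_one hx.ne', div_mul_cancel_right₀ (Gamma_pos_of_pos hx).ne', one_div]

theorem Gamma_div_mul_eq_beta_div (hd : d < 4 / 5) :
    Gamma (1 - d) / ((1 - d) * (2 - 2 * d)) *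
        (Gamma (3 - 3 * d) * Gamma (4 - 5 * d) / (Gamma (4 - 4 * d) * Gamma (5 - 5 * d))) =
      beta (1 - d) (3 - 3 * d) / (4 - 5 * d) / (1 - d) / (2 - 2 * d) := by
  have h := Gamma_div_Gamma_one_add (x := 4 - 5 * d) (by linarith)
  rw [show 1 + (4 - 5 * d) = 5 - 5 * d by ring] at h
  rw [beta, show 1 - d + (3 - 3 * d) = 4 - 4 * d by ring, mul_div_mul_comm, h, ← div_div]
  ring

theorem Gamma_pow_mul_div_eq_beta_div (hd : d < 4 / 5) :
    Gamma (1 - d) ^ 3 * Gamma (4 - 5 * d) /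
        (Gamma (3 - 2 * d) * Gamma (2 - d) * Gamma (5 - 5 * d)) =
      beta (1 - d) (1 - d) / (4 - 5 * d) / (1 - d) / (2 - 2 * d) := by
  have h1 := Gamma_div_Gamma_one_add (x := 1 - d) (by linarith)
  have h2 := Gamma_div_Gamma_one_add (x := 2 - 2 * d) (by linarith)
  have h4 := Gamma_div_Gamma_one_add (x := 4 - 5 * d) (by linarith)
  rw [show 1 + (1 - d) = 2 - d by ring] at h1
  rw [show 1 + (2 - 2 * d) = 3 - 2 * d by ring] at h2
  rw [show 1 + (4 - 5 * d) = 5 - 5 * d by ring] at h4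
  have hΓ : Gamma (2 - 2 * d) ≠ 0 := (Gamma_pos_of_pos (by linarith)).ne'
  calc _ = Gamma (1 - d) ^ 2 / Gamma (2 - 2 * d) * (Gamma (2 - 2 * d) / Gamma (3 - 2 * d)) *
        (Gamma (1 - d) / Gamma (2 - d)) * (Gamma (4 - 5 * d) / Gamma (5 - 5 * d)) := by
        rw [div_mul_div_cancel₀ hΓ]
        ring
    _ = beta (1 - d) (1 - d) / (4 - 5 * d) / (1 - d) / (2 - 2 * d) := by
        rw [h1, h2, h4, beta, show 1 - d + (1 - d) = 2 - 2 * d by ring]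
        ring

end Evaluation

theorem triple_integral_I1_general (d : ℝ) (hd : d < 4 / 5) :
    1 / (d - 1) *
      (∫ u in (0:ℝ)..1, ∫ v in (0:ℝ)..1, ∫ w in (0:ℝ)..1,
        u ^ (3 - 3 * d) * v ^ (2 - d) * (1 - u * v) ^ (-d) * (1 - v * w) ^ (-(2 * d)) *
          (1 - u * v * w) ^ (-d) * (1 - w) ^ (1 - d) *
          hyp2F1 1 d (2 - d) (v * (1 - w) / (1 - v * w)))
    = Real.Gamma (1 - d) / ((1 - d) * (2 - 2 * d)) *
        (Real.Gamma (3 - 3 * d) * Real.Gamma (4 - 5 * d) /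
          (Real.Gamma (4 - 4 * d) * Real.Gamma (5 - 5 * d))) *
        hyp3F2 (2 - 2 * d) 1 d (3 - 2 * d) (2 - d) 1
      - Real.Gamma (1 - d) ^ 3 * Real.Gamma (4 - 5 * d) /
          (Real.Gamma (3 - 2 * d) * Real.Gamma (2 - d) * Real.Gamma (5 - 5 * d)) *
          hyp3F2 (2 - 2 * d) 1 (2 * d - 1) (3 - 2 * d) (2 - d) 1 := by
  have hd1 : d < 1 := by linarith
  have h1 : 1 - d ≠ 0 := (sub_pos.2 hd1).ne'
  have h4 : 0 < 4 - 5 * d := by linarith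
  have hcube := (lintegral_pentagonKernel_eq_lintegral_cubeKernel d).symm.trans
    (lintegral_pentagonKernel hd)
  rw [integral_cube_eq_toReal_lintegral_cubeKernel hd1 (hcube ▸ ENNReal.mul_ne_top
    ENNReal.ofReal_ne_top (lintegral_pentagonKernel_one_ne_top hd1)), hcube, ENNReal.toReal_mul,
    ENNReal.toReal_ofReal (one_div_nonneg.2 h4.le), toReal_lintegral_pentagonKernel_one hd1,
    Gamma_div_mul_eq_beta_div hd, Gamma_pow_mul_div_eq_beta_div hd, ← neg_sub 1 d]
  field_simp
  ring

theorem triple_integral_I1 (d : ℝ) (hd0 : 0 ≤ d) (hd1 : d < 4 / 5) :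
    1 / (d - 1) *
      (∫ u in (0:ℝ)..1, ∫ v in (0:ℝ)..1, ∫ w in (0:ℝ)..1,
        u ^ (3 - 3 * d) * v ^ (2 - d) * (1 - u * v) ^ (-d) * (1 - v * w) ^ (-(2 * d)) *
          (1 - u * v * w) ^ (-d) * (1 - w) ^ (1 - d) *
          hyp2F1 1 d (2 - d) (v * (1 - w) / (1 - v * w)))
    = Real.Gamma (1 - d) / ((1 - d) * (2 - 2 * d)) *
        (Real.Gamma (3 - 3 * d) * Real.Gamma (4 - 5 * d) /
          (Real.Gamma (4 - 4 * d) * Real.Gamma (5 - 5 * d))) *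
        hyp3F2 (2 - 2 * d) 1 d (3 - 2 * d) (2 - d) 1
      - Real.Gamma (1 - d) ^ 3 * Real.Gamma (4 - 5 * d) /
          (Real.Gamma (3 - 2 * d) * Real.Gamma (2 - d) * Real.Gamma (5 - 5 * d)) *
          hyp3F2 (2 - 2 * d) 1 (2 * d - 1) (3 - 2 * d) (2 - d) 1 :=
  triple_integral_I1_general d hd1
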